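/- Let s ≥ 2, let ψ : [0,1]^{s-1} → ℝ≥0 be measurable with ψ ≤ L (0 < L < ∞), C = ∫_{[0,1]^{s-1}} ψ > 0, A = {z ∈ [0,1]^s : ψ(z_1,…,z_{s-1}) ≥ L z_s}, and assume ∂A admits an (s−1)-dimensional Minkowski content M_A ∈ (0,∞). Then there exists m_0 such that for all m ≥ m_0 and every point set P ⊆ [0,1)^s containing exactly one point in each of the M = m^s grid cubes Q_c, writing N = #(P ∩ A) and Y for the projections of the points of P ∩ A onto the first s−1 coordinates, one has N · D*_{N,ψ}(Y) ≤ 3 s^{1/2} M_A m^{s−1}, where D*_{N,ψ}(Y) = sup_{t ∈ [0,1]^{s-1}} |(1/N) Σ_{n=0}^{N−1} 1_{[0,t)}(y_n) − (1/C) ∫_{[0,t)} ψ|. -/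

import Mathlib

open MeasureTheory Set Filter

/-- The half-open anchored box `[0,t) = ∏_j [0, t_j)`. -/
def lowerBox {d : ℕ} (t : Fin d → ℝ) : Set (Fin d → ℝ) :=
  {y | ∀ i, 0 ≤ y i ∧ y i < t i}

/-- The region `A = {z ∈ [0,1]^s : ψ(z_1,…,z_{s-1}) ≥ L z_s}` (with `s = d+1`). -/
def graphRegion {d : ℕ} (ψ : (Fin d → ℝ) → ℝ) (L : ℝ) : Set ((Fin d → ℝ) × ℝ) :=
  {z | z.1 ∈ Icc (0 : Fin d → ℝ) 1 ∧ z.2 ∈ Icc (0 : ℝ) 1 ∧ L * z.2 ≤ ψ z.1}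

/-- The test set `J_t* = ([0,t) × [0,1]) ∩ A`. -/
def Jstar {d : ℕ} (ψ : (Fin d → ℝ) → ℝ) (L : ℝ) (t : Fin d → ℝ) : Set ((Fin d → ℝ) × ℝ) :=
  (lowerBox t ×ˢ Icc (0 : ℝ) 1) ∩ graphRegion ψ L

/-- The closed Euclidean `ε`-neighborhood of a set `E ⊆ ℝ^{d} × ℝ = ℝ^{d+1}`. -/
def euclNbhdP {d : ℕ} (E : Set ((Fin d → ℝ) × ℝ)) (ε : ℝ) : Set ((Fin d → ℝ) × ℝ) :=
  {x | ∃ y ∈ E, Real.sqrt ((∑ i, (x.1 i - y.1 i) ^ 2) + (x.2 - y.2) ^ 2) ≤ ε}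

/-- `∂A` admits the `(s-1)`-dimensional Minkowski content `M` (with `s = d+1`). -/
def HasMinkowskiContentP {d : ℕ} (A : Set ((Fin d → ℝ) × ℝ)) (M : ℝ) : Prop :=
  Tendsto (fun ε : ℝ => (volume (euclNbhdP (frontier A) ε)).toReal / (2 * ε))
    (nhdsWithin 0 (Set.Ioi 0)) (nhds M)

/-- The grid cube `Q_c = ∏_{j=1}^{d+1} [c_j/m, (c_j+1)/m)`. -/
def gridCubeP {d m : ℕ} (c : (Fin d → Fin m) × Fin m) : Set ((Fin d → ℝ) × ℝ) :=
  {z | (∀ i, (c.1 i : ℝ) / m ≤ z.1 i ∧ z.1 i < ((c.1 i : ℝ) + 1) / m) ∧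
       ((c.2 : ℝ) / m ≤ z.2 ∧ z.2 < ((c.2 : ℝ) + 1) / m)}


lemma precon_frontier {X : Type*} [TopologicalSpace X] {s A : Set X} (hs : IsPreconnected s)
    (h1 : (s ∩ A).Nonempty) (h2 : (s ∩ Aᶜ).Nonempty) : (s ∩ frontier A).Nonempty := by
  by_contra hne
  rw [Set.not_nonempty_iff_eq_empty] at hne
  have hx : ∀ z ∈ s, z ∉ frontier A := fun z hz hf => by
    have : z ∈ s ∩ frontier A := ⟨hz, hf⟩
    rw [hne] at this; exact this
  obtain ⟨a, has, haA⟩ := h1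
  obtain ⟨b, hbs, hbA⟩ := h2
  have key : ∀ z ∈ s, (z ∈ A → z ∈ interior A) ∧ (z ∉ A → z ∉ closure A) := by
    intro z hz
    have := hx z hz
    rw [frontier, Set.mem_sdiff, not_and_or, not_not] at this
    refine ⟨fun hA => ?_, fun hA hc => ?_⟩
    · rcases this with h | h
      · exact absurd (subset_closure hA) h
      · exact h
    · rcases this with h | h
      · exact h hc
      · exact hA (interior_subset h)
  obtain ⟨w, hw, hw1, hw2⟩ := hs (interior A) (closure A)ᶜ isOpen_interior
    isClosed_closure.isOpen_compl
    (fun z hz => by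
      by_cases h : z ∈ A
      · exact Or.inl ((key z hz).1 h)
      · exact Or.inr ((key z hz).2 h))
    ⟨a, has, (key a has).1 haA⟩ ⟨b, hbs, (key b hbs).2 hbA⟩
  exact hw2 (subset_closure (interior_subset hw1))

def cellZ {d : ℕ} (m q : ℕ) (c : (Fin d → ℤ) × ℤ) : Set ((Fin d → ℝ) × ℝ) :=
  (Set.pi univ fun i => Ico ((c.1 i : ℝ) / m) (((c.1 i : ℝ) + 1) / m)) ×ˢ
    Ico ((c.2 : ℝ) / q) (((c.2 : ℝ) + 1) / q)

lemma mem_ico_floor {m : ℕ} (hm : 0 < m) (a : ℤ) (x : ℝ) :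
    x ∈ Ico ((a : ℝ) / m) (((a : ℝ) + 1) / m) ↔ ⌊(m : ℝ) * x⌋ = a := by
  have : (0 : ℝ) < m := by exact_mod_cast hm
  rw [Int.floor_eq_iff, mem_Ico, div_le_iff₀ this, lt_div_iff₀ this, mul_comm x]

lemma mem_cellZ {d m q : ℕ} (hm : 0 < m) (hq : 0 < q) (c : (Fin d → ℤ) × ℤ)
    (z : (Fin d → ℝ) × ℝ) :
    z ∈ cellZ m q c ↔ (∀ i, ⌊(m : ℝ) * z.1 i⌋ = c.1 i) ∧ ⌊(q : ℝ) * z.2⌋ = c.2 := by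
  unfold cellZ
  rw [Set.mem_prod, mem_ico_floor hq, Set.mem_univ_pi]
  simp only [mem_ico_floor hm]

lemma cellZ_disj {d m q : ℕ} (hm : 0 < m) (hq : 0 < q) {c c' : (Fin d → ℤ) × ℤ} (h : c ≠ c') :
    Disjoint (cellZ m q c) (cellZ m q c') := by
  rw [Set.disjoint_left]
  intro z h1 h2
  rw [mem_cellZ hm hq] at h1 h2
  apply h
  refine Prod.ext (funext fun i => ?_) ?_
  · rw [← h1.1 i, h2.1 i]
  · rw [← h1.2, h2.2]

lemma cellZ_meas {d m q : ℕ} (c : (Fin d → ℤ) × ℤ) : MeasurableSet (cellZ m q c) :=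
  (MeasurableSet.univ_pi fun _ => measurableSet_Ico).prod measurableSet_Ico

lemma cellZ_convex {d m q : ℕ} (c : (Fin d → ℤ) × ℤ) : Convex ℝ (cellZ m q c) :=
  (convex_pi fun _ _ => convex_Ico _ _).prod (convex_Ico _ _)

lemma cellZ_vol {d m q : ℕ} (c : (Fin d → ℤ) × ℤ) :
    volume (cellZ m q c) = ENNReal.ofReal ((1 / (m : ℝ)) ^ d * (1 / (q : ℝ))) := by
  unfold cellZ
  rw [Measure.volume_eq_prod, Measure.prod_prod, Real.volume_pi_Ico, Real.volume_Ico]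
  have h1 : ∀ i, ((c.1 i : ℝ) + 1) / m - (c.1 i : ℝ) / m = 1 / m := fun i => by ring
  have h2 : ((c.2 : ℝ) + 1) / q - (c.2 : ℝ) / q = 1 / q := by ring
  simp only [h1, h2]
  rw [Finset.prod_const, Finset.card_univ, Fintype.card_fin, ENNReal.ofReal_mul (by positivity),
    ENNReal.ofReal_pow (by positivity)]

lemma ico_dist {m : ℕ} {a x y : ℝ} (hx : x ∈ Ico (a / m) ((a + 1) / m))
    (hy : y ∈ Ico (a / m) ((a + 1) / m)) : (x - y) ^ 2 ≤ 1 / (m : ℝ) ^ 2 := by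
  have e : (1 : ℝ) / (m : ℝ) ^ 2 = (1 / m) ^ 2 := by ring
  have h2 : (a + 1) / m - a / m = 1 / (m : ℝ) := by ring
  rw [e]
  apply sq_le_sq'
  · linarith [hx.1, hx.2, hy.1, hy.2]
  · linarith [hx.1, hx.2, hy.1, hy.2]

lemma nbhd_subset {d : ℕ} {E : Set ((Fin d → ℝ) × ℝ)}
    (hE : E ⊆ Icc (0 : Fin d → ℝ) 1 ×ˢ Icc (0 : ℝ) 1) (ε : ℝ) :
    euclNbhdP E ε ⊆ Icc (fun _ => -ε) (fun _ => 1 + ε) ×ˢ Icc (-ε) (1 + ε) := by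
  rintro x ⟨y, hy, h⟩
  have hy' := hE hy
  have hε : 0 ≤ ε := (Real.sqrt_nonneg _).trans h
  rw [Real.sqrt_le_left hε] at h
  have h0 : ∀ i, 0 ≤ (x.1 i - y.1 i) ^ 2 := fun i => sq_nonneg _
  have hs : 0 ≤ ∑ i, (x.1 i - y.1 i) ^ 2 := Finset.sum_nonneg fun i _ => h0 i
  have h1 : ∀ i, (x.1 i - y.1 i) ^ 2 ≤ ε ^ 2 := fun i => by
    have := Finset.single_le_sum (fun i _ => h0 i) (Finset.mem_univ i)
    nlinarith [sq_nonneg (x.2 - y.2)]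
  have h2 : (x.2 - y.2) ^ 2 ≤ ε ^ 2 := by linarith
  have h1' : ∀ i, -ε ≤ x.1 i - y.1 i ∧ x.1 i - y.1 i ≤ ε := fun i => abs_le_of_sq_le_sq' (h1 i) hε
  have h2' := abs_le_of_sq_le_sq' h2 hε
  have a0 : ∀ i, 0 ≤ y.1 i := fun i => hy'.1.1 i
  have a1 : ∀ i, y.1 i ≤ 1 := fun i => hy'.1.2 i
  have b := hy'.2
  refine ⟨⟨fun i => ?_, fun i => ?_⟩, ?_, ?_⟩
  · have := h1' i; have := a0 i; simp only; linarith
  · have := h1' i; have := a1 i; simp only; linarith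
  · linarith [b.1]
  · linarith [b.2]

lemma cells_card {d : ℕ} {E : Set ((Fin d → ℝ) × ℝ)}
    (hE : E ⊆ Icc (0 : Fin d → ℝ) 1 ×ˢ Icc (0 : ℝ) 1) {m q : ℕ} (hm : 0 < m) (hq : 0 < q)
    (F : Finset ((Fin d → ℤ) × ℤ)) (hF : ∀ c ∈ F, (cellZ m q c ∩ E).Nonempty) :
    (F.card : ℝ) ≤ (m : ℝ) ^ d * q *
      (volume (euclNbhdP E (Real.sqrt (d / (m : ℝ) ^ 2 + 1 / (q : ℝ) ^ 2)))).toReal := by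
  have hm' : (0 : ℝ) < m := by exact_mod_cast hm
  have hq' : (0 : ℝ) < q := by exact_mod_cast hq
  set ε := Real.sqrt (d / (m : ℝ) ^ 2 + 1 / (q : ℝ) ^ 2) with hε
  have hsub : (⋃ c ∈ F, cellZ m q c) ⊆ euclNbhdP E ε := by
    intro x hx
    simp only [mem_iUnion] at hx
    obtain ⟨c, hc, hx⟩ := hx
    obtain ⟨y, hy, hyE⟩ := hF c hc
    refine ⟨y, hyE, Real.sqrt_le_sqrt ?_⟩
    have : ∑ i, (x.1 i - y.1 i) ^ 2 ≤ ∑ _i : Fin d, 1 / (m : ℝ) ^ 2 :=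
      Finset.sum_le_sum fun i _ => ico_dist (hx.1 i (mem_univ i)) (hy.1 i (mem_univ i))
    rw [Finset.sum_const, Finset.card_univ, Fintype.card_fin, nsmul_eq_mul, mul_one_div] at this
    have h2 := ico_dist hx.2 hy.2
    linarith
  have hfin : volume (euclNbhdP E ε) ≠ ⊤ := by
    refine ((measure_mono (nbhd_subset hE ε)).trans_lt ?_).ne
    exact (isCompact_Icc.prod isCompact_Icc).measure_lt_top
  have h1 := measureReal_mono hsub hfin
  rw [measureReal_biUnion_finset (fun c _ c' _ h => cellZ_disj hm hq h) (fun c _ => cellZ_meas c)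
    (fun c _ => by rw [cellZ_vol]; exact ENNReal.ofReal_ne_top)] at h1
  simp only [measureReal_def, cellZ_vol] at h1
  rw [ENNReal.toReal_ofReal (by positivity), Finset.sum_const, nsmul_eq_mul] at h1
  calc (F.card : ℝ) = (m : ℝ) ^ d * q * (F.card * ((1 / (m : ℝ)) ^ d * (1 / (q : ℝ)))) := by
        rw [one_div, inv_pow]; field_simp
    _ ≤ _ := by gcongr

/-- ray exits -/
lemma ray_exit {d : ℕ} (hd : 1 ≤ d) {A : Set ((Fin d → ℝ) × ℝ)}
    (hA : A ⊆ Icc (0 : Fin d → ℝ) 1 ×ˢ Icc (0 : ℝ) 1) {m : ℕ} (hm : 0 < m)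
    (c : (Fin d → ℤ) × ℤ) (b : ℤ) (hsub : cellZ m (2 * m) (c.1, b) ⊆ A)
    (hdis : Disjoint (cellZ m (2 * m) (c.1, b)) (frontier A)) :
    (∃ k : ℤ, 0 < k ∧ (cellZ m (2 * m) (fun i => c.1 i + k, b) ∩ frontier A).Nonempty) ∧
    (∃ k : ℤ, k < 0 ∧ (cellZ m (2 * m) (fun i => c.1 i + k, b) ∩ frontier A).Nonempty) := by
  have hm' : (0 : ℝ) < m := by exact_mod_cast hm
  have h2m : 0 < 2 * m := by omega
  let P : ℝ → (Fin d → ℝ) × ℝ := fun τ => (fun i => (c.1 i : ℝ) / m + τ, (b : ℝ) / ((2 * m : ℕ) : ℝ))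
  have hPc : Continuous P := by fun_prop
  have hPm : ∀ τ, P τ ∈ cellZ m (2 * m) (fun i => c.1 i + ⌊(m : ℝ) * τ⌋, b) := by
    intro τ
    rw [mem_cellZ hm h2m]
    refine ⟨fun i => ?_, ?_⟩
    · have : (m : ℝ) * ((c.1 i : ℝ) / m + τ) = (c.1 i : ℝ) + m * τ := by field_simp
      simp only [P, this]
      rw [Int.floor_intCast_add]
    · have h0 : ((2 * m : ℕ) : ℝ) ≠ 0 := by positivity
      simp only [P]
      rw [mul_div_cancel₀ _ h0, Int.floor_intCast]
  have hP0 : P 0 ∈ A := by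
    apply hsub
    have := hPm 0
    simpa using this
  have i0 : Fin d := ⟨0, hd⟩
  have hz0 : 0 ≤ (c.1 i0 : ℝ) / m ∧ (c.1 i0 : ℝ) / m ≤ 1 := by
    have := hA hP0
    have a := this.1.1 i0
    have b := this.1.2 i0
    simp [P] at a b
    exact ⟨a, b⟩
  have hnk : ∀ τ, P τ ∈ frontier A → ⌊(m : ℝ) * τ⌋ ≠ 0 := by
    intro τ hτ h0
    have := hPm τ
    rw [h0] at this
    simp only [add_zero] at this
    exact Set.disjoint_left.1 hdis this hτ
  constructor
  · have hout : P 2 ∈ Aᶜ := fun h => by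
      have := (hA h).1.2 i0
      simp [P] at this
      linarith
    obtain ⟨w, ⟨τ, hτ, rfl⟩, hw⟩ := precon_frontier (s := P '' Icc 0 2)
      ((isPreconnected_Icc).image P hPc.continuousOn)
      ⟨P 0, ⟨0, by simp, rfl⟩, hP0⟩ ⟨P 2, ⟨2, by simp, rfl⟩, hout⟩
    refine ⟨⌊(m : ℝ) * τ⌋, ?_, P τ, hPm τ, hw⟩
    have := hnk τ hw
    have : 0 ≤ ⌊(m : ℝ) * τ⌋ := Int.floor_nonneg.2 (mul_nonneg hm'.le hτ.1)
    omega
  · have hout : P (-2) ∈ Aᶜ := fun h => by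
      have := (hA h).1.1 i0
      simp [P] at this
      linarith
    obtain ⟨w, ⟨τ, hτ, rfl⟩, hw⟩ := precon_frontier (s := P '' Icc (-2) 0)
      ((isPreconnected_Icc).image P hPc.continuousOn)
      ⟨P 0, ⟨0, by simp, rfl⟩, hP0⟩ ⟨P (-2), ⟨-2, by simp, rfl⟩, hout⟩
    refine ⟨⌊(m : ℝ) * τ⌋, ?_, P τ, hPm τ, hw⟩
    have := hnk τ hw
    have : ⌊(m : ℝ) * τ⌋ ≤ 0 := by
      have : (m : ℝ) * τ ≤ 0 := mul_nonpos_of_nonneg_of_nonpos hm'.le hτ.2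
      have := Int.floor_mono this
      simpa using this
    omega

lemma half_subset {d m : ℕ} (hm : 0 < m) (c : (Fin d → ℤ) × ℤ) (h : Bool) :
    cellZ m (2 * m) (c.1, 2 * c.2 + (if h then 1 else 0)) ⊆ cellZ m m c := by
  intro z hz
  rw [mem_cellZ hm (by omega)] at hz
  rw [mem_cellZ hm hm]
  refine ⟨hz.1, ?_⟩
  have h2 := hz.2
  rw [Int.floor_eq_iff] at h2 ⊢
  push_cast at h2
  cases h
  · simp at h2; constructor <;> linarith
  · simp at h2; constructor <;> linarith

lemma S_card {d : ℕ} (hd : 1 ≤ d) {A : Set ((Fin d → ℝ) × ℝ)}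
    (hA : A ⊆ Icc (0 : Fin d → ℝ) 1 ×ˢ Icc (0 : ℝ) 1) {m : ℕ} (hm : 0 < m) (t : Fin d → ℝ)
    (S : Finset ((Fin d → ℤ) × ℤ)) (hS1 : ∀ c ∈ S, cellZ m m c ⊆ A)
    (hS2 : ∀ c ∈ S, Disjoint (cellZ m m c) (frontier A))
    (hS3 : ∀ c ∈ S, ∀ i, (c.1 i : ℝ) < m * t i)
    (hS4 : ∀ c ∈ S, ∃ i, (m : ℝ) * t i < c.1 i + 1) :
    2 * (S.card : ℝ) ≤ (m : ℝ) ^ d * m * 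
      (volume (euclNbhdP (frontier A)
        (Real.sqrt (d / (m : ℝ) ^ 2 + 1 / ((2 * m : ℕ) : ℝ) ^ 2)))).toReal := by
  classical
  have hfr : frontier A ⊆ Icc (0 : Fin d → ℝ) 1 ×ˢ Icc (0 : ℝ) 1 :=
    frontier_subset_closure.trans (closure_minimal hA (isClosed_Icc.prod isClosed_Icc))
  have hex : ∀ (c : S) (h σ : Bool), ∃ k : ℤ, (if σ then 0 < k else k < 0) ∧
      (cellZ m (2 * m) (fun i => c.1.1 i + k, 2 * c.1.2 + (if h then 1 else 0)) ∩
        frontier A).Nonempty := by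
    intro c h σ
    have := ray_exit hd hA hm c.1 (2 * c.1.2 + (if h then 1 else 0))
      ((half_subset hm c.1 h).trans (hS1 c.1 c.2))
      ((hS2 c.1 c.2).mono_left (half_subset hm c.1 h))
    cases σ
    · simpa using this.2
    · simpa using this.1
  choose k hk1 hk2 using hex
  let g : S × Bool × Bool → (Fin d → ℤ) × ℤ := fun p =>
    (fun i => p.1.1.1 i + k p.1 p.2.1 p.2.2, 2 * p.1.1.2 + (if p.2.1 then 1 else 0))
  have hline : ∀ c ∈ S, ∀ c' ∈ S, ∀ j : ℤ, (∀ i, c'.1 i = c.1 i + j) → j ≤ 0 := by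
    intro c hc c' hc' j hj
    by_contra hcon
    obtain ⟨i, hi⟩ := hS4 c hc
    have h1 := hS3 c' hc' i
    rw [hj i] at h1
    have : (1 : ℝ) ≤ j := by exact_mod_cast (by omega : 1 ≤ j)
    push_cast at h1
    linarith
  have hg : Function.Injective g := by
    rintro ⟨⟨c, hc⟩, h, σ⟩ ⟨⟨c', hc'⟩, h', σ'⟩ heq
    have e1 := congrArg Prod.fst heq
    have e2 := congrArg Prod.snd heq
    simp only [g] at e1 e2
    have hh : h = h' := by
      cases h <;> cases h' <;> simp at e2 ⊢ <;> omega
    subst hh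
    have e3 : c.2 = c'.2 := by omega
    have e1' := fun i => congrFun e1 i
    have j1 := hline c hc c' hc' (k ⟨c, hc⟩ h σ - k ⟨c', hc'⟩ h σ') (fun i => by
      have := e1' i; omega)
    have j2 := hline c' hc' c hc (k ⟨c', hc'⟩ h σ' - k ⟨c, hc⟩ h σ) (fun i => by
      have := e1' i; omega)
    have hcc : c = c' := Prod.ext (funext fun i => by have := e1' i; omega) e3
    subst hcc
    have s1 := hk1 ⟨c, hc⟩ h σ
    have s2 := hk1 ⟨c, hc⟩ h σ'
    have : σ = σ' := by
      cases σ <;> cases σ' <;> simp at s1 s2 ⊢ <;> omega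
    rw [this]
  have hc := cells_card hfr hm (show 0 < 2 * m by omega) (Finset.univ.image g) (by
    intro c hc
    rw [Finset.mem_image] at hc
    obtain ⟨p, -, rfl⟩ := hc
    exact hk2 p.1 p.2.1 p.2.2)
  rw [Finset.card_image_of_injective _ hg] at hc
  simp only [Finset.card_univ, Fintype.card_prod, Fintype.card_coe, Fintype.card_bool] at hc
  push_cast at hc ⊢
  linarith

lemma graph_meas {d : ℕ} {ψ : (Fin d → ℝ) → ℝ} (hmeas : Measurable ψ) (L : ℝ) :
    MeasurableSet (graphRegion ψ L) := by
  have : graphRegion ψ L = (Icc (0 : Fin d → ℝ) 1 ×ˢ Icc (0 : ℝ) 1) ∩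
      {z | L * z.2 ≤ ψ z.1} := by
    ext z; simp only [graphRegion, mem_ofPred_eq, mem_inter_iff, mem_prod]; tauto
  rw [this]
  exact (measurableSet_Icc.prod measurableSet_Icc).inter
    (measurableSet_le (measurable_snd.const_mul L) (hmeas.comp measurable_fst))

lemma graph_sub {d : ℕ} (ψ : (Fin d → ℝ) → ℝ) (L : ℝ) :
    graphRegion ψ L ⊆ Icc (0 : Fin d → ℝ) 1 ×ˢ Icc (0 : ℝ) 1 := fun _ hz => ⟨hz.1, hz.2.1⟩

lemma psi_int {d : ℕ} {L : ℝ} {ψ : (Fin d → ℝ) → ℝ} (hmeas : Measurable ψ)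
    (hψ0 : ∀ z ∈ Icc (0 : Fin d → ℝ) 1, 0 ≤ ψ z)
    (hψL : ∀ z ∈ Icc (0 : Fin d → ℝ) 1, ψ z ≤ L) :
    IntegrableOn ψ (Icc (0 : Fin d → ℝ) 1) := by
  refine Measure.integrableOn_of_bounded (M := L) isCompact_Icc.measure_lt_top.ne
    hmeas.aestronglyMeasurable ?_
  filter_upwards [ae_restrict_mem measurableSet_Icc] with z hz
  rw [Real.norm_eq_abs, abs_of_nonneg (hψ0 z hz)]
  exact hψL z hz

lemma graph_vol {d : ℕ} {L : ℝ} (hL : 0 < L) {ψ : (Fin d → ℝ) → ℝ} (hmeas : Measurable ψ)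
    (hψ0 : ∀ z ∈ Icc (0 : Fin d → ℝ) 1, 0 ≤ ψ z)
    (hψL : ∀ z ∈ Icc (0 : Fin d → ℝ) 1, ψ z ≤ L) {B : Set (Fin d → ℝ)} (hB : MeasurableSet B)
    (hBI : B ⊆ Icc (0 : Fin d → ℝ) 1) :
    volume.real (graphRegion ψ L ∩ (B ×ˢ univ)) = (∫ z in B, ψ z) / L := by
  have hms : MeasurableSet (graphRegion ψ L ∩ (B ×ˢ univ)) :=
    (graph_meas hmeas L).inter (hB.prod MeasurableSet.univ)
  have hsl : ∀ z, volume (Prod.mk z ⁻¹' (graphRegion ψ L ∩ (B ×ˢ univ))) =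
      B.indicator (fun z => ENNReal.ofReal (ψ z / L)) z := by
    intro z
    by_cases hz : z ∈ B
    · rw [indicator_of_mem hz]
      have : Prod.mk z ⁻¹' (graphRegion ψ L ∩ (B ×ˢ univ)) = Icc 0 (ψ z / L) := by
        ext h
        have hl : ψ z / L ≤ 1 := by rw [div_le_one hL]; exact hψL z (hBI hz)
        have hzI := hBI hz
        simp only [graphRegion, mem_preimage, mem_inter_iff, mem_ofPred_eq, mem_prod, mem_univ,
          and_true, hz, hzI, true_and]
        rw [mem_Icc, mem_Icc, le_div_iff₀ hL, mul_comm L]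
        constructor
        · rintro ⟨⟨h0, h1⟩, h2⟩; exact ⟨h0, h2⟩
        · rintro ⟨h0, h2⟩
          refine ⟨⟨h0, ?_⟩, h2⟩
          rw [← le_div_iff₀ hL] at h2
          linarith
      rw [this, Real.volume_Icc, sub_zero]
    · rw [indicator_of_notMem hz]
      have : Prod.mk z ⁻¹' (graphRegion ψ L ∩ (B ×ˢ univ)) = ∅ := by
        ext h; simp [hz]
      rw [this, measure_empty]
  rw [measureReal_def, Measure.volume_eq_prod, Measure.prod_apply hms]
  simp only [hsl]
  rw [lintegral_indicator hB, ← ofReal_integral_eq_lintegral_ofReal, ENNReal.toReal_ofReal,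
    integral_div]
  · exact setIntegral_nonneg hB fun z hz => div_nonneg (hψ0 z (hBI hz)) hL.le
  · exact ((psi_int hmeas hψ0 hψL).mono_set hBI).div_const L
  · filter_upwards [ae_restrict_mem hB] with z hz
    exact div_nonneg (hψ0 z (hBI hz)) hL.le

lemma avg_bound {X : Type*} [MeasurableSpace X] {μ : Measure X} {Q : Set X} (hQ : MeasurableSet Q)
    {v : ℝ} (hv : 0 < v) (hvol : μ.real Q * v = 1) (hfin : μ Q ≠ ⊤) {f : X → ℝ}
    (hf : IntegrableOn f Q μ)
    {a b : ℝ} (ha : ∀ z ∈ Q, a ≤ f z) (hb : ∀ z ∈ Q, f z ≤ b) {x : X} (hx : x ∈ Q) :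
    |f x - v * ∫ z in Q, f z ∂μ| ≤ b - a := by
  have hc : ∀ c : ℝ, IntegrableOn (fun _ : X => c) Q μ := fun c => integrableOn_const hfin
  have h1 := setIntegral_mono_on (hc a) hf hQ ha
  have h2 := setIntegral_mono_on hf (hc b) hQ hb
  rw [setIntegral_const, smul_eq_mul] at h1 h2
  have h1' : a ≤ v * ∫ z in Q, f z ∂μ := by
    calc a = v * (μ.real Q * a) := by rw [← mul_assoc, mul_comm v, hvol, one_mul]
      _ ≤ _ := by gcongr
  have h2' : v * ∫ z in Q, f z ∂μ ≤ b := by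
    calc _ ≤ v * (μ.real Q * b) := by gcongr
      _ = b := by rw [← mul_assoc, mul_comm v, hvol, one_mul]
  rw [abs_le]
  constructor <;> linarith [ha x hx, hb x hx]

def iotaZ {d m : ℕ} (c : (Fin d → Fin m) × Fin m) : (Fin d → ℤ) × ℤ :=
  (fun i => ((c.1 i : ℕ) : ℤ), ((c.2 : ℕ) : ℤ))

lemma iotaZ_inj {d m : ℕ} : Function.Injective (iotaZ (d := d) (m := m)) := by
  intro c c' h
  have e1 := congrArg Prod.fst h
  have e2 := congrArg Prod.snd h
  simp only [iotaZ] at e1 e2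
  refine Prod.ext (funext fun i => Fin.ext ?_) (Fin.ext ?_)
  · exact_mod_cast congrFun e1 i
  · exact_mod_cast e2

lemma grid_eq {d m : ℕ} (c : (Fin d → Fin m) × Fin m) : gridCubeP c = cellZ m m (iotaZ c) := by
  ext z
  simp [gridCubeP, cellZ, iotaZ]

lemma grid_union {d m : ℕ} (hm : 0 < m) :
    (⋃ c : (Fin d → Fin m) × Fin m, cellZ m m (iotaZ c)) =
      (Set.pi univ fun i => Ico ((0 : Fin d → ℝ) i) ((1 : Fin d → ℝ) i)) ×ˢ Ico (0 : ℝ) 1 := by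
  have hm' : (0 : ℝ) < m := by exact_mod_cast hm
  have key : ∀ x : ℝ, x ∈ Ico (0 : ℝ) 1 ↔ ∃ a : Fin m, ⌊(m : ℝ) * x⌋ = ((a : ℕ) : ℤ) := by
    intro x
    constructor
    · intro hx
      have h0 : 0 ≤ ⌊(m : ℝ) * x⌋ := Int.floor_nonneg.2 (mul_nonneg hm'.le hx.1)
      have h1 : ⌊(m : ℝ) * x⌋ < m := by
        rw [Int.floor_lt]; push_cast; nlinarith [hx.2]
      exact ⟨⟨⌊(m : ℝ) * x⌋.toNat, by omega⟩, by simp [h0]⟩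
    · rintro ⟨a, ha⟩
      rw [Int.floor_eq_iff] at ha
      have h1 : ((a : ℕ) : ℝ) + 1 ≤ m := by exact_mod_cast a.2
      have h0 : (0 : ℝ) ≤ ((a : ℕ) : ℝ) := by positivity
      push_cast at ha
      constructor
      · by_contra h; push Not at h; nlinarith
      · by_contra h; push Not at h; nlinarith
  ext z
  simp only [mem_iUnion, mem_cellZ hm hm, mem_prod, mem_univ_pi, Pi.zero_apply, Pi.one_apply, key,
    iotaZ]
  constructor
  · rintro ⟨c, h1, h2⟩
    exact ⟨fun i => ⟨c.1 i, h1 i⟩, c.2, h2⟩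
  · rintro ⟨h1, a, h2⟩
    choose g hg using h1
    exact ⟨(g, a), hg, h2⟩

lemma box_meas {d : ℕ} (t : Fin d → ℝ) : MeasurableSet (lowerBox t) := by
  have : lowerBox t = Set.pi univ fun i => Ico 0 (t i) := by
    ext; simp [lowerBox]
  rw [this]
  exact MeasurableSet.univ_pi fun _ => measurableSet_Ico

set_option maxHeartbeats 1000000 in
lemma disc_bound {d : ℕ} {L : ℝ} (hL : 0 < L) {ψ : (Fin d → ℝ) → ℝ} (hmeas : Measurable ψ)
    (hψ0 : ∀ z ∈ Icc (0 : Fin d → ℝ) 1, 0 ≤ ψ z)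
    (hψL : ∀ z ∈ Icc (0 : Fin d → ℝ) 1, ψ z ≤ L)
    {C : ℝ} (hC : C = ∫ z in Icc (0 : Fin d → ℝ) 1, ψ z) (hCpos : 0 < C)
    {m : ℕ} (hm : 0 < m) (x : ((Fin d → Fin m) × Fin m) → (Fin d → ℝ) × ℝ)
    (hx : ∀ c, x c ∈ gridCubeP c) {t : Fin d → ℝ} (ht : t ∈ Icc (0 : Fin d → ℝ) 1) :
    ∃ K S : Finset ((Fin d → ℤ) × ℤ),
      (∀ c ∈ K, (cellZ m m c ∩ frontier (graphRegion ψ L)).Nonempty) ∧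
      (∀ c ∈ S, cellZ m m c ⊆ graphRegion ψ L) ∧
      (∀ c ∈ S, Disjoint (cellZ m m c) (frontier (graphRegion ψ L))) ∧
      (∀ c ∈ S, ∀ i, (c.1 i : ℝ) < m * t i) ∧
      (∀ c ∈ S, ∃ i, (m : ℝ) * t i < c.1 i + 1) ∧
      |∑ c, (graphRegion ψ L ∩ (lowerBox t ×ˢ univ)).indicator (1 : (Fin d → ℝ) × ℝ → ℝ) (x c)
        - (1 / C * ∫ z in lowerBox t, ψ z) * ∑ c, (graphRegion ψ L).indicator (1 : (Fin d → ℝ) × ℝ → ℝ) (x c)|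
        ≤ (K.card : ℝ) + S.card := by
  classical
  have hm' : (0 : ℝ) < m := by exact_mod_cast hm
  set A := graphRegion ψ L with hAdef
  set B := lowerBox t with hBdef
  set J := A ∩ (B ×ˢ univ) with hJdef
  have hBI : B ⊆ Icc (0 : Fin d → ℝ) 1 := fun z hz =>
    ⟨fun i => (hz i).1, fun i => (hz i).2.le.trans (ht.2 i)⟩
  have hBm : MeasurableSet B := box_meas t
  have hAm : MeasurableSet A := graph_meas hmeas L
  have hJm : MeasurableSet J := hAm.inter (hBm.prod MeasurableSet.univ)
  have hAI := graph_sub ψ L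
  have hAfin : volume A ≠ ⊤ :=
    ((measure_mono hAI).trans_lt (isCompact_Icc.prod isCompact_Icc).measure_lt_top).ne
  have hJfin : volume J ≠ ⊤ := ((measure_mono inter_subset_left).trans_lt hAfin.lt_top).ne
  have hVJ : volume.real J = (∫ z in B, ψ z) / L := graph_vol hL hmeas hψ0 hψL hBm hBI
  have hVA : volume.real A = C / L := by
    have := graph_vol hL hmeas hψ0 hψL measurableSet_Icc (subset_refl (Icc (0 : Fin d → ℝ) 1))
    rw [← hC] at this
    rw [← this]
    congr 1
    symm
    rw [inter_eq_left]
    exact fun z hz => ⟨hz.1, mem_univ _⟩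
  set V := ∫ z in B, ψ z with hV
  set p := 1 / C * V with hp
  have hp0 : 0 ≤ p := mul_nonneg (by positivity) (setIntegral_nonneg hBm fun z hz => hψ0 z (hBI hz))
  have hp1 : p ≤ 1 := by
    have : V ≤ C := by
      rw [hC]
      refine setIntegral_mono_set (psi_int hmeas hψ0 hψL) ?_ hBI.eventuallyLE
      filter_upwards [ae_restrict_mem measurableSet_Icc] with z hz using hψ0 z hz
    rw [hp, one_div_mul_eq_div, div_le_one hCpos]; exact this
  let f : (Fin d → ℝ) × ℝ → ℝ := fun z => J.indicator 1 z - p * A.indicator 1 z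
  have hJi : Integrable (J.indicator (1 : (Fin d → ℝ) × ℝ → ℝ)) :=
    (integrable_indicator_iff hJm).2 (integrableOn_const (C := (1 : ℝ)) hJfin)
  have hAi : Integrable (A.indicator (1 : (Fin d → ℝ) × ℝ → ℝ)) :=
    (integrable_indicator_iff hAm).2 (integrableOn_const (C := (1 : ℝ)) hAfin)
  have hfi : Integrable f := hJi.sub (hAi.const_mul p)
  have hf0 : ∫ z, f z = 0 := by
    simp only [f]
    rw [integral_sub hJi (hAi.const_mul p), integral_const_mul, integral_indicator_one hJm,
      integral_indicator_one hAm, hVJ, hVA, hp]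
    field_simp
    ring
  have hfout : ∀ z, z ∉ A → f z = 0 := fun z hz => by
    have : z ∉ J := fun h => hz h.1
    simp [f, hz, this]
  have hfJ : ∀ z, z ∈ A → z.1 ∈ B → f z = 1 - p := fun z hz hb => by
    have : z ∈ J := ⟨hz, hb, mem_univ _⟩
    simp [f, hz, this]
  have hfnJ : ∀ z, z ∈ A → z.1 ∉ B → f z = -p := fun z hz hb => by
    have : z ∉ J := fun h => hb h.2.1
    simp [f, hz, this]
  have hflo : ∀ z, -p ≤ f z ∧ f z ≤ 1 - p := fun z => by
    by_cases hz : z ∈ A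
    · by_cases hb : z.1 ∈ B
      · rw [hfJ z hz hb]; constructor <;> linarith
      · rw [hfnJ z hz hb]; constructor <;> linarith
    · rw [hfout z hz]; constructor <;> linarith
  have hsum0 : ∑ c : (Fin d → Fin m) × Fin m, ∫ z in cellZ m m (iotaZ c), f z = 0 := by
    rw [← integral_iUnion_fintype (fun c => cellZ_meas _)
      (fun c c' h => cellZ_disj hm hm (fun e => h (iotaZ_inj e))) (fun c => hfi.integrableOn),
      grid_union hm]
    have hae : ((Set.pi univ fun i => Ico ((0 : Fin d → ℝ) i) ((1 : Fin d → ℝ) i)) ×ˢ Ico (0 : ℝ) 1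
        : Set ((Fin d → ℝ) × ℝ)) =ᵐ[volume] (Icc (0 : Fin d → ℝ) 1 ×ˢ Icc (0 : ℝ) 1) :=
      Measure.set_prod_ae_eq Measure.univ_pi_Ico_ae_eq_Icc Ico_ae_eq_Icc
    rw [setIntegral_congr_set hae, setIntegral_eq_integral_of_forall_compl_eq_zero, hf0]
    exact fun z hz => hfout z fun h => hz (hAI h)
  let K0 : Finset ((Fin d → Fin m) × Fin m) :=
    Finset.univ.filter fun c => (cellZ m m (iotaZ c) ∩ frontier A).Nonempty
  let S0 : Finset ((Fin d → Fin m) × Fin m) := Finset.univ.filter fun c =>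
    cellZ m m (iotaZ c) ⊆ A ∧ Disjoint (cellZ m m (iotaZ c)) (frontier A) ∧
    (∀ i, ((iotaZ c).1 i : ℝ) < m * t i) ∧ ∃ i, (m : ℝ) * t i < (iotaZ c).1 i + 1
  have hterm : ∀ c, |f (x c) - (m : ℝ) ^ (d + 1) * ∫ z in cellZ m m (iotaZ c), f z| ≤
      (if c ∈ K0 then (1 : ℝ) else 0) + (if c ∈ S0 then 1 else 0) := by
    intro c
    have hxc : x c ∈ cellZ m m (iotaZ c) := by rw [← grid_eq]; exact hx c
    have hvol : volume.real (cellZ m m (iotaZ c)) * (m : ℝ) ^ (d + 1) = 1 := by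
      rw [measureReal_def, cellZ_vol, ENNReal.toReal_ofReal (by positivity), one_div, inv_pow, pow_succ]
      field_simp
    have hfin : volume (cellZ m m (iotaZ c)) ≠ ⊤ := by
      rw [cellZ_vol]; exact ENNReal.ofReal_ne_top
    have gen : ∀ a b : ℝ, (∀ z ∈ cellZ m m (iotaZ c), a ≤ f z) →
        (∀ z ∈ cellZ m m (iotaZ c), f z ≤ b) →
        |f (x c) - (m : ℝ) ^ (d + 1) * ∫ z in cellZ m m (iotaZ c), f z| ≤ b - a :=
      fun a b ha hb => avg_bound (cellZ_meas _) (by positivity) hvol hfin hfi.integrableOn ha hb hxc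
    have gen1 : |f (x c) - (m : ℝ) ^ (d + 1) * ∫ z in cellZ m m (iotaZ c), f z| ≤ 1 := by
      have := gen (-p) (1 - p) (fun z _ => (hflo z).1) (fun z _ => (hflo z).2)
      linarith
    have gen0 : ∀ a : ℝ, (∀ z ∈ cellZ m m (iotaZ c), f z = a) →
        |f (x c) - (m : ℝ) ^ (d + 1) * ∫ z in cellZ m m (iotaZ c), f z| ≤ 0 := fun a ha => by
      have := gen a a (fun z hz => (ha z hz).ge) (fun z hz => (ha z hz).le)
      linarith
    by_cases hK : c ∈ K0
    · rw [if_pos hK]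
      have : (0 : ℝ) ≤ if c ∈ S0 then 1 else 0 := by split_ifs <;> norm_num
      linarith
    rw [if_neg hK, zero_add]
    by_cases hS : c ∈ S0
    · rw [if_pos hS]; exact gen1
    rw [if_neg hS]
    have hK' : ¬ (cellZ m m (iotaZ c) ∩ frontier A).Nonempty := fun h =>
      hK (Finset.mem_filter.2 ⟨Finset.mem_univ _, h⟩)
    have hdis : Disjoint (cellZ m m (iotaZ c)) (frontier A) := by
      rw [Set.disjoint_iff_inter_eq_empty]; exact Set.not_nonempty_iff_eq_empty.1 hK'
    by_cases hmeet : (cellZ m m (iotaZ c) ∩ A).Nonempty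
    · have hsub : cellZ m m (iotaZ c) ⊆ A := by
        intro z hz
        by_contra hzA
        exact hK' (precon_frontier (cellZ_convex _).isPreconnected hmeet ⟨z, hz, hzA⟩)
      by_cases h3 : ∀ i, ((iotaZ c).1 i : ℝ) < m * t i
      · by_cases h4 : ∃ i, (m : ℝ) * t i < (iotaZ c).1 i + 1
        · exact absurd (Finset.mem_filter.2 ⟨Finset.mem_univ _, hsub, hdis, h3, h4⟩) hS
        · push Not at h4
          apply gen0 (1 - p)
          intro z hz
          refine hfJ z (hsub hz) fun i => ?_
          have hzi := hz.1 i (mem_univ i)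
          have h4i := h4 i
          have hnn : (0 : ℝ) ≤ (iotaZ c).1 i := by simp [iotaZ]
          refine ⟨le_trans (by positivity) hzi.1, hzi.2.trans_le ?_⟩
          rw [div_le_iff₀ hm', mul_comm]; exact h4i
      · push Not at h3
        obtain ⟨i, hi⟩ := h3
        apply gen0 (-p)
        intro z hz
        refine hfnJ z (hsub hz) fun hb => ?_
        have hzi := hz.1 i (mem_univ i)
        have h1 := (hb i).2
        have h2 : t i ≤ ((iotaZ c).1 i : ℝ) / m := by
          rw [le_div_iff₀ hm', mul_comm]; exact hi
        linarith [hzi.1]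
    · apply gen0 0
      intro z hz
      exact hfout z fun h => hmeet ⟨z, hz, h⟩
  refine ⟨K0.image iotaZ, S0.image iotaZ, ?_, ?_, ?_, ?_, ?_, ?_⟩
  · intro c hc
    obtain ⟨c', hc', rfl⟩ := Finset.mem_image.1 hc
    have hq := (Finset.mem_filter.1 hc').2
    exact hq
  · intro c hc
    obtain ⟨c', hc', rfl⟩ := Finset.mem_image.1 hc
    have hq := (Finset.mem_filter.1 hc').2
    exact hq.1
  · intro c hc
    obtain ⟨c', hc', rfl⟩ := Finset.mem_image.1 hc
    have hq := (Finset.mem_filter.1 hc').2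
    exact hq.2.1
  · intro c hc
    obtain ⟨c', hc', rfl⟩ := Finset.mem_image.1 hc
    have hq := (Finset.mem_filter.1 hc').2
    exact hq.2.2.1
  · intro c hc
    obtain ⟨c', hc', rfl⟩ := Finset.mem_image.1 hc
    have hq := (Finset.mem_filter.1 hc').2
    exact hq.2.2.2
  · rw [Finset.card_image_of_injective _ iotaZ_inj, Finset.card_image_of_injective _ iotaZ_inj]
    have e : ∑ c, J.indicator (1 : (Fin d → ℝ) × ℝ → ℝ) (x c) - p * ∑ c, A.indicator (1 : (Fin d → ℝ) × ℝ → ℝ) (x c) =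
        ∑ c, (f (x c) - (m : ℝ) ^ (d + 1) * ∫ z in cellZ m m (iotaZ c), f z) := by
      rw [Finset.sum_sub_distrib, ← Finset.mul_sum, hsum0, mul_zero, sub_zero]
      simp only [f]
      rw [Finset.sum_sub_distrib, Finset.mul_sum]
    rw [e]
    refine (Finset.abs_sum_le_sum_abs _ _).trans ((Finset.sum_le_sum fun c _ => hterm c).trans ?_)
    rw [Finset.sum_add_distrib]
    simp

/-- **Deterministic bound `N·D* ≤ 3√s M_A m^{s-1}`** (the `q = ∞` case of Theorem 2 of
the paper, with `s = d+1`): for all large `m` and every stratified point set (one point in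
each grid cube), the accepted points, projected onto the first `s-1` coordinates, satisfy
`N · D*_{N,ψ}(Y) ≤ 3 √s M_A m^{s-1}`. -/
theorem N_star_discrepancy_stratified (d : ℕ) (hd : 1 ≤ d)
    (L : ℝ) (hL : 0 < L) (ψ : (Fin d → ℝ) → ℝ) (hmeas : Measurable ψ)
    (hψ0 : ∀ z ∈ Icc (0 : Fin d → ℝ) 1, 0 ≤ ψ z)
    (hψL : ∀ z ∈ Icc (0 : Fin d → ℝ) 1, ψ z ≤ L)
    (C : ℝ) (hC : C = ∫ z in Icc (0 : Fin d → ℝ) 1, ψ z) (hCpos : 0 < C)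
    (MA : ℝ) (hMApos : 0 < MA) (hMink : HasMinkowskiContentP (graphRegion ψ L) MA) :
    ∃ m₀ : ℕ, ∀ m : ℕ, m₀ ≤ m →
      ∀ x : ((Fin d → Fin m) × Fin m) → (Fin d → ℝ) × ℝ, (∀ c, x c ∈ gridCubeP c) →
      ∀ N : ℕ, N = Nat.card {c : (Fin d → Fin m) × Fin m // x c ∈ graphRegion ψ L} →
      ∀ (y : Fin N → (Fin d → ℝ))
        (e : Fin N ≃ {c : (Fin d → Fin m) × Fin m // x c ∈ graphRegion ψ L}),
        (∀ k, y k = (x (e k)).1) →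
        ∀ t ∈ Icc (0 : Fin d → ℝ) 1,
          (N : ℝ) * |(1 / (N : ℝ)) * ∑ k, (lowerBox t).indicator (fun _ => (1 : ℝ)) (y k)
              - (1 / C) * ∫ z in lowerBox t, ψ z|
            ≤ 3 * Real.sqrt (d + 1) * MA * (m : ℝ) ^ d := by
  classical
  set A := graphRegion ψ L with hAdef
  have hAI := graph_sub ψ L
  have hfr : frontier A ⊆ Icc (0 : Fin d → ℝ) 1 ×ˢ Icc (0 : ℝ) 1 :=
    frontier_subset_closure.trans (closure_minimal hAI (isClosed_Icc.prod isClosed_Icc))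
  set a := Real.sqrt ((d : ℝ) + 1) with ha
  set b := Real.sqrt ((d : ℝ) + 1 / 4) with hb
  have hab : b < a := Real.sqrt_lt_sqrt (by positivity) (by linarith)
  have hb0 : 0 < b := Real.sqrt_pos.2 (by positivity)
  have ha0 : 0 < a := hb0.trans hab
  obtain ⟨δ, hδ0, hδ⟩ : ∃ δ : ℝ, 0 < δ ∧ (1 + δ) * (2 * a + b) = 3 * a :=
    ⟨(a - b) / (2 * a + b), div_pos (by linarith) (by linarith), by field_simp; ring⟩
  have hev : ∀ᶠ ε in nhdsWithin (0 : ℝ) (Ioi 0),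
      (volume (euclNbhdP (frontier A) ε)).toReal / (2 * ε) < MA * (1 + δ) :=
    hMink.eventually (gt_mem_nhds (by nlinarith))
  rw [eventually_nhdsWithin_iff, Metric.eventually_nhds_iff] at hev
  obtain ⟨ε₀, hε₀, hev⟩ := hev
  have hmk : ∀ ε, 0 < ε → ε < ε₀ →
      (volume (euclNbhdP (frontier A) ε)).toReal ≤ MA * (1 + δ) * (2 * ε) := by
    intro ε h0 h1
    have := hev (y := ε) (by rw [Real.dist_eq, sub_zero, abs_of_pos h0]; exact h1) h0
    exact ((div_lt_iff₀ (by positivity)).1 this).le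
  obtain ⟨m₁, hm₁⟩ := exists_nat_gt (a / ε₀)
  refine ⟨m₁ + 1, ?_⟩
  intro m hmm x hx N hN y e hy t ht
  have hm : 0 < m := by omega
  have hm' : (0 : ℝ) < m := by exact_mod_cast hm
  have ham : a / m < ε₀ := by
    rw [div_lt_iff₀ hm']
    rw [div_lt_iff₀ hε₀] at hm₁
    have : (m₁ : ℝ) ≤ m := by exact_mod_cast (by omega : m₁ ≤ m)
    nlinarith
  have hea : Real.sqrt (d / (m : ℝ) ^ 2 + 1 / (m : ℝ) ^ 2) = a / m := by
    rw [← add_div, Real.sqrt_div' _ (by positivity), Real.sqrt_sq hm'.le]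
  have heb : Real.sqrt (d / (m : ℝ) ^ 2 + 1 / ((2 * m : ℕ) : ℝ) ^ 2) = b / m := by
    have : d / (m : ℝ) ^ 2 + 1 / ((2 * m : ℕ) : ℝ) ^ 2 = ((d : ℝ) + 1 / 4) / (m : ℝ) ^ 2 := by
      push_cast; field_simp; ring
    rw [this, Real.sqrt_div' _ (by positivity), Real.sqrt_sq hm'.le]
  obtain ⟨K, S, hK, hS1, hS2, hS3, hS4, hbound⟩ :=
    disc_bound hL hmeas hψ0 hψL hC hCpos hm x hx ht
  have hKc := cells_card hfr hm hm K hK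
  have hSc := S_card hd hAI hm t S hS1 hS2 hS3 hS4
  rw [hea] at hKc
  rw [heb] at hSc
  have h1 := hmk (a / m) (by positivity) ham
  have h2 := hmk (b / m) (by positivity) ((div_lt_div_of_pos_right hab hm').trans ham)
  have hKc' : (K.card : ℝ) ≤ (m : ℝ) ^ d * (MA * (1 + δ) * (2 * a)) := by
    calc (K.card : ℝ) ≤ (m : ℝ) ^ d * m * (MA * (1 + δ) * (2 * (a / m))) :=
          hKc.trans (by gcongr)
      _ = _ := by field_simp
  have hSc' : 2 * (S.card : ℝ) ≤ (m : ℝ) ^ d * (MA * (1 + δ) * (2 * b)) := by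
    calc 2 * (S.card : ℝ) ≤ (m : ℝ) ^ d * m * (MA * (1 + δ) * (2 * (b / m))) :=
          hSc.trans (by gcongr)
      _ = _ := by field_simp
  have htot : (K.card : ℝ) + S.card ≤ 3 * a * MA * (m : ℝ) ^ d := by
    rw [← hδ]; linarith
  have hNs : ∑ c, A.indicator (1 : (Fin d → ℝ) × ℝ → ℝ) (x c) = N := by
    rw [hN, Nat.card_eq_fintype_card, Fintype.card_subtype]
    simp [Set.indicator_apply]
  have hJs : ∑ c, (A ∩ (lowerBox t ×ˢ univ)).indicator (1 : (Fin d → ℝ) × ℝ → ℝ) (x c) =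
      ∑ k, (lowerBox t).indicator (fun _ => (1 : ℝ)) (y k) := by
    simp only [hy]
    rw [Equiv.sum_comp e (fun c => (lowerBox t).indicator (fun _ => (1 : ℝ)) (x c.1).1),
      ← Finset.sum_subtype (Finset.univ.filter fun c => x c ∈ A) (by simp)
        (fun c => (lowerBox t).indicator (fun _ => (1 : ℝ)) (x c).1), Finset.sum_filter]
    refine Finset.sum_congr rfl fun c _ => ?_
    by_cases h : x c ∈ A <;> simp [Set.indicator_apply, h]
  rw [hNs, hJs] at hbound
  rcases Nat.eq_zero_or_pos N with h0 | hNpos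
  · have h0' : (N : ℝ) = 0 := by rw [h0, Nat.cast_zero]
    rw [h0', zero_mul]
    positivity
  · have hN' : (0 : ℝ) < N := by exact_mod_cast hNpos
    refine le_trans (le_of_eq ?_) (hbound.trans htot)
    rw [← abs_of_pos hN', ← abs_mul, abs_of_pos hN']
    congr 1
    field_simp
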